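/- arXiv:1904.01407 — 2 statements merged into one kernel-verified Lean document; each statement's English description precedes it below -/
import Mathlib

section
/- Let 𝒜 be a class of weakly-archimedean linearly ordered FL_ew-algebras containing, for each n ∈ ℕ, a non-n-contractive algebra. Let P be a PCP instance, M a transitive safe A-Kripke model for some A ∈ 𝒜, and u ∈ W a world such that e(u,γ)=1 for all γ ∈ Γ_P and e(u, □φ_P) < 1. Then there exists α_y ∈ A such that e(t₁, y) = e(t₂, y) = α_y for all worlds t₁, t₂ with Rut₁ and Rut₂. -/
/-!
The value of `y` at a successor of `u` lies between those of `□y` and `◇y` at `u`. Since `1` is the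
top element, a product equal to `1` has both factors equal to `1`, so the truth of `□y ↔ ◇y` at `u`
gives `◇y ≤ □y` there. Hence the two bounds agree, and the common value is that of `□y` at `u`.
-/

/-- An FL_ew-algebra: a bounded lattice with a commutative monoid structure whose unit is the
top element, together with a residuum `himp` satisfying the residuation law. -/
class FLew (α : Type) extends Lattice α, BoundedOrder α, CommMonoid α where
  himp : α → α → α
  mul_le_iff_le_himp : ∀ {a b c : α}, a * b ≤ c ↔ a ≤ himp b c
  one_eq_top : (1 : α) = ⊤

namespace FLew

/-- The lattice order is linear. -/
def isChain (α : Type) [FLew α] : Prop := ∀ a b : α, a ≤ b ∨ b ≤ a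

/-- Weakly archimedean: if `a ≤ bⁿ` for all `n` then `a * b = a`. -/
def weaklyArchimedean (α : Type) [FLew α] : Prop :=
  ∀ a b : α, (∀ n : ℕ, a ≤ b ^ n) → a * b = a

/-- `n`-contractive: `a^(n+1) = aⁿ` for every `a`. -/
def contractive (α : Type) [FLew α] (n : ℕ) : Prop :=
  ∀ a : α, a ^ (n + 1) = a ^ n

end FLew

/-- Modal formulas over a set `V` of propositional variables. -/
inductive MFormula (V : Type) : Type
  | var : V → MFormula V
  | fZero : MFormula V
  | fOne : MFormula V
  | fAnd : MFormula V → MFormula V → MFormula V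
  | fOr : MFormula V → MFormula V → MFormula V
  | fMul : MFormula V → MFormula V → MFormula V
  | fImp : MFormula V → MFormula V → MFormula V
  | fBox : MFormula V → MFormula V
  | fDia : MFormula V → MFormula V
  deriving DecidableEq

namespace MFormula

variable {V : Type}

def fNeg (φ : MFormula V) : MFormula V := .fImp φ .fZero

def fIff (φ ψ : MFormula V) : MFormula V := .fMul (.fImp φ ψ) (.fImp ψ φ)

def fPow (φ : MFormula V) : ℕ → MFormula V
  | 0 => .fOne
  | n + 1 => .fMul (fPow φ n) φ

def bigOr : List (MFormula V) → MFormula V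
  | [] => .fZero
  | φ :: l => .fOr φ (bigOr l)

def map {V' : Type} (f : V → V') : MFormula V → MFormula V'
  | .var x => .var (f x)
  | .fZero => .fZero
  | .fOne => .fOne
  | .fAnd φ ψ => .fAnd (map f φ) (map f ψ)
  | .fOr φ ψ => .fOr (map f φ) (map f ψ)
  | .fMul φ ψ => .fMul (map f φ) (map f ψ)
  | .fImp φ ψ => .fImp (map f φ) (map f ψ)
  | .fBox φ => .fBox (map f φ)
  | .fDia φ => .fDia (map f φ)

end MFormula

/-- A (safe) Kripke model over an FL_ew-algebra `α`: the evaluation `e` is world-wise a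
homomorphism on the propositional connectives and interprets `□`/`◇` as the infimum/supremum
of the values at the accessible worlds (which are required to exist: safety). -/
structure KModel (α : Type) [FLew α] (V : Type) where
  W : Type
  nonempty : Nonempty W
  R : W → W → Prop
  e : W → MFormula V → α
  e_zero : ∀ v, e v .fZero = ⊥
  e_one : ∀ v, e v .fOne = 1
  e_and : ∀ v φ ψ, e v (.fAnd φ ψ) = e v φ ⊓ e v ψ
  e_or : ∀ v φ ψ, e v (.fOr φ ψ) = e v φ ⊔ e v ψ
  e_mul : ∀ v φ ψ, e v (.fMul φ ψ) = e v φ * e v ψ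
  e_imp : ∀ v φ ψ, e v (.fImp φ ψ) = FLew.himp (e v φ) (e v ψ)
  e_box : ∀ v φ, IsGLB {a | ∃ w, R v w ∧ e w φ = a} (e v (.fBox φ))
  e_dia : ∀ v φ, IsLUB {a | ∃ w, R v w ∧ e w φ = a} (e v (.fDia φ))

namespace KModel

variable {α V : Type} [FLew α]

/-- The accessibility relation is transitive. -/
def IsTrans (M : KModel α V) : Prop := ∀ a b c : M.W, M.R a b → M.R b c → M.R a c

/-- The model is finite. -/
def IsFinite (M : KModel α V) : Prop := Finite M.W

/-- The depth of world `w` is at most `k`: every `R`-chain starting at `w` has length `≤ k`. -/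
def DepthLE (M : KModel α V) (w : M.W) (k : ℕ) : Prop :=
  ∀ (n : ℕ) (c : Fin (n + 1) → M.W), c 0 = w →
    (∀ i : Fin n, M.R (c i.castSucc) (c i.succ)) → n ≤ k

/-- World `w` has finite depth. -/
def FiniteDepth (M : KModel α V) (w : M.W) : Prop := ∃ k, M.DepthLE w k

end KModel

/-- Local consequence over the models (over the algebras `A i`) satisfying the class
condition `C`. -/
def LocalConsequence {I : Type} (A : I → Type) [∀ i, FLew (A i)] {V : Type}
    (C : ∀ i, KModel (A i) V → Prop) (Γ : List (MFormula V)) (φ : MFormula V) : Prop :=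
  ∀ (i : I) (M : KModel (A i) V), C i M → ∀ v : M.W,
    (∀ γ ∈ Γ, M.e v γ = 1) → M.e v φ = 1

/-- Number of digits of `y` in base `s` (a number always has at least one digit). -/
def numDigits (s y : ℕ) : ℕ := if y = 0 then 1 else (Nat.digits s y).length

/-- Concatenation of the numbers `x` and `y` in base `s`. -/
def concat2 (s x y : ℕ) : ℕ := x * s ^ numDigits s y + y

/-- Concatenation of a list of numbers in base `s`. -/
def concatList (s : ℕ) (l : List ℕ) : ℕ := l.foldl (concat2 s) 0

/-- An instance of the Post Correspondence Problem: a list of pairs of numbers in base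
`s ≥ 2`, without repeated pairs. -/
structure PCPInstance where
  s : ℕ
  hs : 2 ≤ s
  m : ℕ
  v : Fin m → ℕ
  w : Fin m → ℕ
  norep : ∀ i j : Fin m, i ≠ j → v i ≠ v j ∨ w i ≠ w j

/-- A solution of a PCP instance: a nonempty sequence of indices along which the
`v`-concatenation equals the `w`-concatenation. -/
def PCPInstance.HasSolution (P : PCPInstance) : Prop :=
  ∃ l : List (Fin P.m), l ≠ [] ∧
    concatList P.s (l.map fun i => P.v i) = concatList P.s (l.map fun i => P.w i)

/-- The three variables `y`, `v`, `w` of the reduction. -/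
def yv : MFormula (Fin 3) := .var 0
def vv : MFormula (Fin 3) := .var 1
def wv : MFormula (Fin 3) := .var 2

/-- Formula (1) of `Γ_P`: `□y ↔ ◇y`. -/
def gamma1 : MFormula (Fin 3) := MFormula.fIff (.fBox yv) (.fDia yv)

/-- Formula (2) of `Γ_P`. -/
def gamma2 (P : PCPInstance) : MFormula (Fin 3) :=
  .fBox (MFormula.bigOr ((List.finRange P.m).map fun i =>
    .fAnd
      (MFormula.fIff vv (.fMul (MFormula.fPow (.fBox vv) (P.s ^ numDigits P.s (P.v i)))
        (MFormula.fPow yv (P.v i))))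
      (MFormula.fIff wv (.fMul (MFormula.fPow (.fBox wv) (P.s ^ numDigits P.s (P.w i)))
        (MFormula.fPow yv (P.w i))))))

/-- Formula (3) of `Γ_P`: `□(□(v·w) → □v·□w)`. -/
def gamma3 : MFormula (Fin 3) :=
  .fBox (.fImp (.fBox (.fMul vv wv)) (.fMul (.fBox vv) (.fBox wv)))

def GammaP (P : PCPInstance) : List (MFormula (Fin 3)) := [gamma1, gamma2 P, gamma3]

/-- `φ_P = (v↔w) → (y ∨ (v·w → v·w·y))`. -/
def phiP (_P : PCPInstance) : MFormula (Fin 3) :=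
  .fImp (MFormula.fIff vv wv) (.fOr yv (.fImp (.fMul vv wv) (.fMul (.fMul vv wv) yv)))


namespace FLew

variable {α : Type} [FLew α]

theorem mul_le_right' (a b : α) : a * b ≤ b := by
  rw [mul_le_iff_le_himp]
  have h : (1 : α) ≤ himp b b := mul_le_iff_le_himp.1 (one_mul b).le
  exact (le_top.trans_eq one_eq_top.symm).trans h

theorem le_of_iff_eq_one {a b : α} (h : himp a b * himp b a = 1) : b ≤ a := by
  have h' : (1 : α) ≤ himp b a := h ▸ mul_le_right' (himp a b) (himp b a)
  simpa using mul_le_iff_le_himp.2 h'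

end FLew

/-- **Lemma.** If `M` is a transitive safe `A`-Kripke model (`A` in a class `𝒜` of
weakly-archimedean linearly ordered FL_ew-algebras containing non-`n`-contractive members for
every `n`), and at `u` all formulas of `Γ_P` take value `1` while `□φ_P` takes value `< 1`,
then the variable `y` takes one common value `α_y` at all successors of `u`. -/
theorem common_value_of_y
    {I : Type} (A : I → Type) [inst : ∀ i, FLew (A i)]
    (hchain : ∀ i, FLew.isChain (A i))
    (hwa : ∀ i, FLew.weaklyArchimedean (A i))
    (hnc : ∀ n : ℕ, ∃ i, ¬ FLew.contractive (A i) n)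
    (P : PCPInstance) (i : I) (M : KModel (A i) (Fin 3))
    (htrans : M.IsTrans) (u : M.W)
    (hΓ : ∀ γ ∈ GammaP P, M.e u γ = 1)
    (hφ : M.e u (.fBox (phiP P)) < 1) :
    ∃ αy : A i, ∀ t₁ t₂ : M.W, M.R u t₁ → M.R u t₂ →
      M.e t₁ yv = αy ∧ M.e t₂ yv = αy := by
  have h1 : M.e u gamma1 = 1 := hΓ _ (by simp [GammaP])
  have hle : M.e u (.fDia yv) ≤ M.e u (.fBox yv) := by
    rw [gamma1, MFormula.fIff, M.e_mul, M.e_imp, M.e_imp] at h1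
    exact FLew.le_of_iff_eq_one h1
  have key : ∀ t, M.R u t → M.e t yv = M.e u (.fBox yv) := fun t ht =>
    le_antisymm (((M.e_dia u yv).1 ⟨t, ht, rfl⟩).trans hle) ((M.e_box u yv).1 ⟨t, ht, rfl⟩)
  exact ⟨_, fun t₁ t₂ h₁ h₂ => ⟨key t₁ h₁, key t₂ h₂⟩⟩
end

section
/- Let 𝒜 be a class of weakly-archimedean linearly ordered FL_ew-algebras containing, for each n, a non-n-contractive algebra, P a PCP instance, and M a finite transitive tree-shaped safe A-Kripke model (A ∈ 𝒜) with root u such that e(u,γ)=1 for all γ ∈ Γ_P and e(u,□φ_P)<1, and let z be a world with Ruz and e(z,φ_P)<1 of finite depth. Then for each world t with Rzt or t = z that has at least one successor, there is a single world t_w with Rtt_w such that e(t, □v) = e(t_w, v) and e(t, □w) = e(t_w, w). -/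
/-! ### Powers in FL_ew-algebras -/

namespace FLew

variable {α : Type} [FLew α]

lemma le_one' (a : α) : a ≤ 1 := by
  rw [one_eq_top]; exact le_top

lemma mul_le_mul_right'' {a b : α} (h : a ≤ b) (c : α) : a * c ≤ b * c :=
  mul_le_iff_le_himp.2 (h.trans (mul_le_iff_le_himp.1 le_rfl))

lemma mul_le_mul'' {a b c d : α} (h : a ≤ b) (h' : c ≤ d) : a * c ≤ b * d := by
  refine (mul_le_mul_right'' h c).trans ?_
  rw [mul_comm b c, mul_comm b d]
  exact mul_le_mul_right'' h' b

lemma mul_le_left' (a b : α) : a * b ≤ a := by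
  simpa using mul_le_mul'' (le_refl a) (le_one' b)

lemma himp_eq_one {a b : α} : himp a b = 1 ↔ a ≤ b := by
  constructor
  · intro h
    have := (mul_le_iff_le_himp (a := 1) (b := a) (c := b)).2 h.ge
    simpa using this
  · intro h
    exact le_antisymm (le_one' _) (mul_le_iff_le_himp.1 (by simpa using h))

lemma eq_one_of_mul_eq_one {a b : α} (h : a * b = 1) : a = 1 ∧ b = 1 :=
  ⟨le_antisymm (le_one' _) (h ▸ mul_le_left' a b),
    le_antisymm (le_one' _) (by rw [mul_comm] at h; exact h ▸ mul_le_left' b a)⟩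

lemma pow_anti (a : α) {m n : ℕ} (h : m ≤ n) : a ^ n ≤ a ^ m := by
  obtain ⟨k, rfl⟩ := Nat.exists_eq_add_of_le h
  rw [pow_add]; exact mul_le_left' _ _

lemma pow_eq_of_lt {a : α} {p q : ℕ} (hpq : p < q) (h : a ^ p = a ^ q) (j : ℕ) :
    a ^ (p + j) = a ^ p := by
  have h1 : a ^ (p + 1) = a ^ p :=
    le_antisymm (pow_anti a (Nat.le_succ p)) (h.le.trans (pow_anti a hpq))
  induction j with
  | zero => rfl
  | succ j ih => rw [← add_assoc, pow_succ, ih, ← pow_succ, h1]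

/-- Two equal powers with distinct exponents make the sequence of powers stationary from the
smaller exponent on, so a power that is not below `a ^ n` has a unique exponent. -/
lemma pow_inj_of_not_le {a : α} {n p q : ℕ} (hn : ¬ a ^ p ≤ a ^ n) (h : a ^ p = a ^ q) :
    p = q := by
  have key : ∀ p q : ℕ, ¬ a ^ p ≤ a ^ n → a ^ p = a ^ q → ¬ p < q := by
    intro p q hn h hlt
    have h1 := pow_eq_of_lt hlt h n
    exact hn (h1 ▸ pow_anti a (Nat.le_add_left n p))
  have h1 := key p q hn h
  have h2 := key q p (h ▸ hn) h.symm
  omega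

/-- If `a ^ k * a ^ l = a ^ k' * a ^ l'` is not below some power of `a`, and the left factors are
below the right ones, then the factors agree. -/
lemma factors_eq {a : α} {n k l k' l' : ℕ} (hn : ¬ a ^ k * a ^ l ≤ a ^ n)
    (h : a ^ k * a ^ l = a ^ k' * a ^ l') (hk : a ^ k ≤ a ^ k') (hl : a ^ l ≤ a ^ l') :
    a ^ k = a ^ k' ∧ a ^ l = a ^ l' := by
  have hsum : k + l = k' + l' := by
    rw [← pow_add] at hn
    exact pow_inj_of_not_le hn (by rw [pow_add, pow_add, h])
  have aux : ∀ p q : ℕ, a ^ p ≤ a ^ q → ¬ a ^ p ≤ a ^ n → q ≤ p := by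
    intro p q hpq hp
    by_contra! hlt
    have := pow_inj_of_not_le hp (le_antisymm hpq (pow_anti a hlt.le))
    omega
  have h1 := aux k k' hk fun h => hn ((mul_le_left' _ _).trans h)
  have h2 := aux l l' hl fun h => hn (by rw [mul_comm]; exact (mul_le_left' _ _).trans h)
  obtain ⟨rfl, rfl⟩ : k = k' ∧ l = l' := by omega
  exact ⟨rfl, rfl⟩

end FLew

/-! ### Evaluation in models over chains, and powers by induction on depth -/

namespace KModel

open FLew

variable {α V : Type} [FLew α]

lemma e_pow (M : KModel α V) (t : M.W) (φ : MFormula V) (n : ℕ) :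
    M.e t (φ.fPow n) = M.e t φ ^ n := by
  induction n with
  | zero => simp [MFormula.fPow, M.e_one]
  | succ n ih => rw [MFormula.fPow, M.e_mul, ih, pow_succ]

lemma eq_of_iff_eq_one (M : KModel α V) {t : M.W} {φ ψ : MFormula V}
    (h : M.e t (MFormula.fIff φ ψ) = 1) : M.e t φ = M.e t ψ := by
  rw [MFormula.fIff, M.e_mul, M.e_imp, M.e_imp] at h
  obtain ⟨h1, h2⟩ := eq_one_of_mul_eq_one h
  exact le_antisymm (himp_eq_one.1 h1) (himp_eq_one.1 h2)

lemma exists_of_bigOr_eq_one (M : KModel α V) (hc : isChain α) (hne : (⊥ : α) ≠ 1) {t : M.W}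
    {l : List (MFormula V)} (h : M.e t (MFormula.bigOr l) = 1) : ∃ φ ∈ l, M.e t φ = 1 := by
  induction l with
  | nil => exact absurd (by rw [← h, MFormula.bigOr, M.e_zero]) hne
  | cons φ l ih =>
    rw [MFormula.bigOr, M.e_or] at h
    rcases hc (M.e t φ) (M.e t (MFormula.bigOr l)) with h' | h'
    · rw [sup_eq_right.2 h'] at h
      obtain ⟨ψ, hψ, h1⟩ := ih h
      exact ⟨ψ, List.mem_cons_of_mem _ hψ, h1⟩
    · rw [sup_eq_left.2 h'] at h
      exact ⟨φ, List.mem_cons_self, h⟩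

lemma box_le (M : KModel α V) {t r : M.W} (h : M.R t r) (φ : MFormula V) :
    M.e t (.fBox φ) ≤ M.e r φ :=
  (M.e_box t φ).1 ⟨r, h, rfl⟩

lemma le_dia (M : KModel α V) {t r : M.W} (h : M.R t r) (φ : MFormula V) :
    M.e r φ ≤ M.e t (.fDia φ) :=
  (M.e_dia t φ).1 ⟨r, h, rfl⟩

lemma eq_one_of_box_eq_one (M : KModel α V) {t r : M.W} (h : M.R t r) {φ : MFormula V}
    (hb : M.e t (.fBox φ) = 1) : M.e r φ = 1 :=
  le_antisymm (le_one' _) (hb ▸ M.box_le h φ)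

/-- In a finite model over a chain, the value of `□φ` at a non-terminal world is attained. -/
lemma exists_box_witness (M : KModel α V) (hc : isChain α) (hfin : M.IsFinite) {t : M.W}
    (ht : ∃ r, M.R t r) (φ : MFormula V) : ∃ r, M.R t r ∧ M.e t (.fBox φ) = M.e r φ := by
  have : Finite M.W := hfin
  obtain ⟨r, hr, hmin⟩ := Set.Finite.exists_minimalFor (fun r => M.e r φ) {r | M.R t r}
    (Set.toFinite _) ht
  refine ⟨r, hr, le_antisymm (M.box_le hr φ) ((M.e_box t φ).2 ?_)⟩
  rintro _ ⟨r', hr', rfl⟩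
  rcases hc (M.e r φ) (M.e r' φ) with h | h
  · exact h
  · exact hmin hr' h

lemma box_eq_one_of_terminal (M : KModel α V) {t : M.W} (ht : ¬ ∃ r, M.R t r) (φ : MFormula V) :
    M.e t (.fBox φ) = 1 := by
  refine le_antisymm (le_one' _) ((M.e_box t φ).2 ?_)
  rintro _ ⟨r, hr, -⟩
  exact absurd ⟨r, hr⟩ ht

lemma DepthLE.succ {M : KModel α V} {t r : M.W} {k : ℕ} (h : M.DepthLE t k) (hr : M.R t r) :
    ∃ k', k = k' + 1 ∧ M.DepthLE r k' := by
  have key : ∀ (n : ℕ) (c : Fin (n + 1) → M.W), c 0 = r →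
      (∀ i : Fin n, M.R (c i.castSucc) (c i.succ)) → n + 1 ≤ k := by
    intro n c h0 hc
    refine h (n + 1) (Fin.cons t c) rfl fun i => ?_
    refine Fin.cases ?_ (fun i => ?_) i
    · simpa [h0] using hr
    · simpa [← Fin.succ_castSucc] using hc i
  have h1 := key 0 (fun _ => r) rfl fun i => i.elim0
  refine ⟨k - 1, by omega, fun n c h0 hc => ?_⟩
  have := key n c h0 hc
  omega

/-- Suppose that at every successor `t` of `u` the value of `φ` is `(□φ)^p * a^q` for some `p`
and `q`. Then `φ` and `□φ` take powers of `a` as values at every successor of `u` of finite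
depth. -/
lemma isPow_of_depthLE (M : KModel α V) (hc : isChain α) (hfin : M.IsFinite) (htrans : M.IsTrans)
    {u : M.W} {a : α} {φ : MFormula V}
    (hstep : ∀ t, M.R u t → ∃ p q : ℕ, M.e t φ = M.e t (.fBox φ) ^ p * a ^ q) (k : ℕ) :
    ∀ t, M.R u t → M.DepthLE t k →
      (∃ j : ℕ, M.e t φ = a ^ j) ∧ ∃ j : ℕ, M.e t (.fBox φ) = a ^ j := by
  induction k using Nat.strong_induction_on with
  | _ k ih =>
  intro t hut hk
  have hbox : ∃ j : ℕ, M.e t (.fBox φ) = a ^ j := by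
    by_cases ht : ∃ r, M.R t r
    · obtain ⟨r, hr, he⟩ := M.exists_box_witness hc hfin ht φ
      obtain ⟨k', rfl, hk'⟩ := hk.succ hr
      rw [he]
      exact (ih k' (Nat.lt_succ_self _) r (htrans _ _ _ hut hr) hk').1
    · exact ⟨0, by rw [M.box_eq_one_of_terminal ht, pow_zero]⟩
  refine ⟨?_, hbox⟩
  obtain ⟨j, hj⟩ := hbox
  obtain ⟨p, q, h⟩ := hstep t hut
  exact ⟨j * p + q, by rw [h, hj, ← pow_mul, ← pow_add]⟩

end KModel

/-- **Lemma.** In a finite transitive tree-shaped model with root `u` where `Γ_P` holds at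
`u` and `□φ_P` has value `< 1` at `u`, with `z` a finite-depth successor of `u` falsifying
`φ_P`: every world `t` equal to `z` or accessible from `z` that has a successor has a single
successor simultaneously witnessing the values of `□v` and of `□w` at `t`. -/
theorem common_witness_for_box_v_and_box_w
    {I : Type} (A : I → Type) [inst : ∀ i, FLew (A i)]
    (hchain : ∀ i, FLew.isChain (A i))
    (hwa : ∀ i, FLew.weaklyArchimedean (A i))
    (hnc : ∀ n : ℕ, ∃ i, ¬ FLew.contractive (A i) n)
    (P : PCPInstance) (i : I) (M : KModel (A i) (Fin 3))
    (hfin : M.IsFinite) (htrans : M.IsTrans) (u : M.W)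
    (hroot : ∀ t : M.W, t ≠ u → M.R u t)
    (hΓ : ∀ γ ∈ GammaP P, M.e u γ = 1)
    (hφ : M.e u (.fBox (phiP P)) < 1)
    (z : M.W) (hz : M.R u z) (hzφ : M.e z (phiP P) < 1) (hzfd : M.FiniteDepth z) :
    ∀ t : M.W, (M.R z t ∨ t = z) → (∃ r : M.W, M.R t r) →
      ∃ tw : M.W, M.R t tw ∧
        M.e t (.fBox vv) = M.e tw vv ∧ M.e t (.fBox wv) = M.e tw wv := by
  have hc := hchain i
  have hne : (⊥ : A i) ≠ 1 := fun h => by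
    have h1 : M.e z (phiP P) < ⊥ := h ▸ hzφ
    exact not_lt_bot h1
  have hg1 : M.e u gamma1 = 1 := hΓ _ (by simp [GammaP])
  have hg2 : M.e u (gamma2 P) = 1 := hΓ _ (by simp [GammaP])
  have hg3 : M.e u gamma3 = 1 := hΓ _ (by simp [GammaP])
  set a := M.e u (.fBox yv) with ha
  have hy : ∀ t, M.R u t → M.e t yv = a := fun t ht =>
    le_antisymm ((M.le_dia ht yv).trans (M.eq_of_iff_eq_one hg1).ge) (M.box_le ht yv)
  have hstep : ∀ t, M.R u t →
      (∃ p q : ℕ, p ≠ 0 ∧ M.e t vv = M.e t (.fBox vv) ^ p * a ^ q) ∧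
        ∃ p q : ℕ, p ≠ 0 ∧ M.e t wv = M.e t (.fBox wv) ^ p * a ^ q := by
    intro t ht
    obtain ⟨ψ, hψ, h1⟩ := M.exists_of_bigOr_eq_one hc hne (M.eq_one_of_box_eq_one ht hg2)
    obtain ⟨j, -, rfl⟩ := List.mem_map.1 hψ
    rw [M.e_and] at h1
    have hv := M.eq_of_iff_eq_one (le_antisymm (FLew.le_one' _) (h1 ▸ inf_le_left))
    have hw := M.eq_of_iff_eq_one (le_antisymm (FLew.le_one' _) (h1 ▸ inf_le_right))
    rw [M.e_mul, M.e_pow, M.e_pow, hy t ht] at hv hw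
    have hs : P.s ≠ 0 := by have := P.hs; omega
    exact ⟨⟨_, _, pow_ne_zero _ hs, hv⟩, ⟨_, _, pow_ne_zero _ hs, hw⟩⟩
  have le_of : ∀ (x b : A i) (p q : ℕ), p ≠ 0 → x = b ^ p * a ^ q → x ≤ b := by
    intro x b p q hp hx
    rw [hx]
    refine (FLew.mul_le_left' _ _).trans ?_
    simpa using FLew.pow_anti b (Nat.one_le_iff_ne_zero.2 hp)
  have hvbox : ∀ t, M.R u t → M.e t vv ≤ M.e t (.fBox vv) := fun t ht => by
    obtain ⟨p, q, hp, h⟩ := (hstep t ht).1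
    exact le_of _ _ p q hp h
  have hwbox : ∀ t, M.R u t → M.e t wv ≤ M.e t (.fBox wv) := fun t ht => by
    obtain ⟨p, q, hp, h⟩ := (hstep t ht).2
    exact le_of _ _ p q hp h
  obtain ⟨n, hn⟩ : ∃ n : ℕ, ¬ M.e z vv * M.e z wv ≤ a ^ n := by
    by_contra! hall
    have h1 := hwa i _ _ hall
    apply hzφ.ne
    rw [phiP, M.e_imp, M.e_or, M.e_imp, M.e_mul, M.e_mul, M.e_mul, hy z hz, h1,
      FLew.himp_eq_one.2 le_rfl, FLew.himp_eq_one]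
    exact (FLew.le_one' _).trans le_sup_right
  obtain ⟨k, hk⟩ := hzfd
  intro t hzt ht
  have hut : M.R u t := by
    rcases hzt with h | rfl
    · exact htrans _ _ _ hz h
    · exact hz
  obtain ⟨kt, hkt⟩ : ∃ k, M.DepthLE t k := by
    rcases hzt with h | rfl
    · obtain ⟨k', -, h'⟩ := hk.succ h
      exact ⟨k', h'⟩
    · exact ⟨k, hk⟩
  obtain ⟨tw, htw, he⟩ := M.exists_box_witness hc hfin ht (.fMul vv wv)
  have hutw := htrans _ _ _ hut htw
  obtain ⟨ktw, -, hktw⟩ := hkt.succ htw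
  have hstepv := fun t ht => (hstep t ht).1.imp fun _ h => h.imp fun _ h => h.2
  have hstepw := fun t ht => (hstep t ht).2.imp fun _ h => h.imp fun _ h => h.2
  obtain ⟨k₁, hk₁⟩ := (M.isPow_of_depthLE hc hfin htrans hstepv kt t hut hkt).2
  obtain ⟨l₁, hl₁⟩ := (M.isPow_of_depthLE hc hfin htrans hstepw kt t hut hkt).2
  obtain ⟨k₂, hk₂⟩ := (M.isPow_of_depthLE hc hfin htrans hstepv ktw tw hutw hktw).1
  obtain ⟨l₂, hl₂⟩ := (M.isPow_of_depthLE hc hfin htrans hstepw ktw tw hutw hktw).1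
  have hv : M.e t (.fBox vv) ≤ M.e tw vv := M.box_le htw vv
  have hw : M.e t (.fBox wv) ≤ M.e tw wv := M.box_le htw wv
  have hprod : M.e t (.fBox vv) * M.e t (.fBox wv) = M.e tw vv * M.e tw wv := by
    refine le_antisymm (FLew.mul_le_mul'' hv hw) ?_
    have h3 := M.eq_one_of_box_eq_one hut hg3
    rw [M.e_imp, FLew.himp_eq_one, he, M.e_mul, M.e_mul] at h3
    exact h3
  have hnt : ¬ M.e t (.fBox vv) * M.e t (.fBox wv) ≤ a ^ n := by
    intro hle
    apply hn
    refine (FLew.mul_le_mul'' ?_ ?_).trans hle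
    · rcases hzt with h | rfl
      · exact (hvbox z hz).trans ((M.box_le h vv).trans (hvbox t hut))
      · exact hvbox t hut
    · rcases hzt with h | rfl
      · exact (hwbox z hz).trans ((M.box_le h wv).trans (hwbox t hut))
      · exact hwbox t hut
  refine ⟨tw, htw, ?_⟩
  rw [hk₁, hl₁, hk₂, hl₂] at *
  exact FLew.factors_eq hnt hprod hv hw
end
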